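/- arXiv:1504.07661 — 2 statements merged into one kernel-verified Lean document; each statement's English description precedes it below -/
import Mathlib

section
/- For every pair of points p, p' ∈ ℤ², the waterline orders ≺_p and ≺_{p'} have no bad pair; that is, no two integers form a bad pair for (≺_p, p) and (≺_{p'}, p'). -/
open scoped Classical

/-- Points of the digital plane. -/
abbrev Pt : Type := ℤ × ℤ

/-- `q` lies in the closed first quadrant of `p`. -/
def Quad1 (p q : Pt) : Prop := p.1 ≤ q.1 ∧ p.2 ≤ q.2

/-- The number of elements `y` of the finite set `J` with `y ≺ x` or `y = x`. -/
noncomputable def rankLE (lt : ℤ → ℤ → Prop) (J : Finset ℤ) (x : ℤ) : ℤ :=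
  ((J.filter fun y => lt y x ∨ y = x).card : ℤ)

/-- `x` is among the `k` smallest elements of `J` with respect to the linear order `lt`. -/
def AmongSmallest (lt : ℤ → ℤ → Prop) (J : Finset ℤ) (k x : ℤ) : Prop :=
  x ∈ J ∧ rankLE lt J x ≤ k

/-- The interval `I(p,q) = [p.x+p.y, q.x+q.y-1]`. -/
noncomputable def Ival (p q : Pt) : Finset ℤ := Finset.Icc (p.1 + p.2) (q.1 + q.2 - 1)

/-- Membership in `H(lt,p,q)`: the `q.x - p.x` smallest elements of `I(p,q)` w.r.t. `lt`. -/
def Hmem (lt : ℤ → ℤ → Prop) (p q : Pt) (a : ℤ) : Prop :=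
  AmongSmallest lt (Ival p q) (q.1 - p.1) a

/-- The digital segment `R(lt,p,q)` for `q ∈ Q¹_p`, generated by the linear order `lt`. -/
noncomputable def seg (lt : ℤ → ℤ → Prop) (p q : Pt) : Set Pt :=
  {r : Pt | p.1 ≤ r.1 ∧ r.1 ≤ q.1 ∧ p.2 ≤ r.2 ∧ r.2 ≤ q.2 ∧
    p.1 + p.2 ≤ r.1 + r.2 ∧ r.1 + r.2 ≤ q.1 + q.2 ∧
    r.1 - p.1 =
      (((Finset.Icc (p.1 + p.2) (r.1 + r.2 - 1)).filter fun a => Hmem lt p q a).card : ℤ)}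

/-- `(t₁,t₂)` is a witness to the violation of (S3) for the pair of sets `(S,S')`. -/
def Witness (S S' : Set Pt) (t₁ t₂ : Pt) : Prop :=
  t₁ ∈ S ∧ t₁ ∈ S' ∧ t₂ ∈ S ∧ t₂ ∈ S' ∧
  t₁.1 + t₁.2 < t₂.1 + t₂.2 ∧
  ((t₁.1 + 1, t₁.2) : Pt) ∈ S ∧ ((t₁.1, t₁.2 + 1) : Pt) ∈ S' ∧
  ((t₂.1, t₂.2 - 1) : Pt) ∈ S ∧ ((t₂.1 - 1, t₂.2) : Pt) ∈ S'

/-- `a ≠ b` form a bad pair for `(lt,p)` and `(lt',p')`, where `p.x ≤ p'.x`. -/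
def BadPair (lt lt' : ℤ → ℤ → Prop) (p p' : Pt) (a b : ℤ) : Prop :=
  a ≠ b ∧ ∃ C ℓ : ℤ, p.1 + p.2 ≤ C ∧ p'.1 + p'.2 ≤ C ∧
    a ∈ Finset.Icc (p.1 + p.2) (C - 1) ∧ b ∈ Finset.Icc (p.1 + p.2) (C - 1) ∧
    a ∈ Finset.Icc (p'.1 + p'.2) (C - 1) ∧ b ∈ Finset.Icc (p'.1 + p'.2) (C - 1) ∧
    AmongSmallest lt (Finset.Icc (p.1 + p.2) (C - 1)) ℓ a ∧
    ¬ AmongSmallest lt (Finset.Icc (p.1 + p.2) (C - 1)) ℓ b ∧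
    AmongSmallest lt' (Finset.Icc (p'.1 + p'.2) (C - 1)) (ℓ - (p'.1 - p.1)) b ∧
    ¬ AmongSmallest lt' (Finset.Icc (p'.1 + p'.2) (C - 1)) (ℓ - (p'.1 - p.1)) a

/-- Bad pair for arbitrary `p, p'`: for `p.x > p'.x` the roles of `p` and `p'` are exchanged. -/
def BadPairSym (lt lt' : ℤ → ℤ → Prop) (p p' : Pt) (a b : ℤ) : Prop :=
  (p.1 ≤ p'.1 ∧ BadPair lt lt' p p' a b) ∨ (p'.1 ≤ p.1 ∧ BadPair lt' lt p' p a b)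

/-- Adjacency in the unit grid graph on `ℤ²`. -/
def GridAdj (u v : Pt) : Prop := |u.1 - v.1| + |u.2 - v.2| = 1

/-- `S` is the vertex set of a path from `p` to `q` in the unit grid graph. -/
def IsGridPath (S : Set Pt) (p q : Pt) : Prop :=
  ∃ (n : ℕ) (f : ℕ → Pt), f 0 = p ∧ f n = q ∧
    (∀ i, i < n → GridAdj (f i) (f (i + 1))) ∧
    (∀ i j, i ≤ n → j ≤ n → f i = f j → i = j) ∧
    S = {r : Pt | ∃ i, i ≤ n ∧ f i = r}

/-- The pair `p, q` has nonnegative slope. -/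
def NonnegPair (p q : Pt) : Prop := (p.1 ≤ q.1 ∧ p.2 ≤ q.2) ∨ (q.1 ≤ p.1 ∧ q.2 ≤ p.2)

/-- A nonnegative-slope digital segment system `R` is a CDS: properties (S1)-(S5). -/
def IsCDS (R : Pt → Pt → Set Pt) : Prop :=
  ∀ p q : Pt, NonnegPair p q →
    IsGridPath (R p q) p q ∧
    R p q = R q p ∧
    (∀ r s : Pt, r ∈ R p q → s ∈ R p q → NonnegPair r s → R r s ⊆ R p q) ∧
    (∃ r : Pt, r ∉ R p q ∧ NonnegPair p r ∧ R p q ⊆ R p r) ∧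
    (p.1 = q.1 → ∀ r ∈ R p q, r.1 = p.1) ∧
    (p.2 = q.2 → ∀ r ∈ R p q, r.2 = p.2)

/-- The nonnegative-slope digital segment system generated by an assignment of
linear orders to the points of `ℤ²`. -/
noncomputable def genR (ord : Pt → ℤ → ℤ → Prop) (p q : Pt) : Set Pt :=
  if p.1 ≤ q.1 ∧ p.2 ≤ q.2 then seg (ord p) p q else seg (ord q) q p

/-- The orders `lt` at `p` and `lt'` at `p'` are in agreement. -/
def Agree (p p' : Pt) (lt lt' : ℤ → ℤ → Prop) : Prop :=
  ∀ a b : ℤ, max p.1 p'.1 + max p.2 p'.2 ≤ a → max p.1 p'.1 + max p.2 p'.2 ≤ b →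
    (lt a b ↔ lt' a b)

/-- Two digital segments are smooth: the antidiagonal distance function is
monotonically nondecreasing or nonincreasing on its domain. -/
def SmoothPair (S S' : Set Pt) : Prop :=
  (∀ r₁ s₁ r₂ s₂ : Pt, r₁ ∈ S → s₁ ∈ S' → r₂ ∈ S → s₂ ∈ S' →
      r₁.1 + r₁.2 = s₁.1 + s₁.2 → r₂.1 + r₂.2 = s₂.1 + s₂.2 →
      r₁.1 + r₁.2 ≤ r₂.1 + r₂.2 → r₁.1 - s₁.1 ≤ r₂.1 - s₂.1) ∨
  (∀ r₁ s₁ r₂ s₂ : Pt, r₁ ∈ S → s₁ ∈ S' → r₂ ∈ S → s₂ ∈ S' →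
      r₁.1 + r₁.2 = s₁.1 + s₁.2 → r₂.1 + r₂.2 = s₂.1 + s₂.2 →
      r₁.1 + r₁.2 ≤ r₂.1 + r₂.2 → r₂.1 - s₂.1 ≤ r₁.1 - s₁.1)

/-- The waterline assignment of linear orders. -/
def waterOrd (p : Pt) : ℤ → ℤ → Prop := fun a b =>
  if 0 ≤ p.2 then a < b
  else (p.1 ≤ a ∧ p.1 ≤ b ∧ a < b) ∨ (p.1 ≤ a ∧ b < p.1) ∨ (a < p.1 ∧ b < p.1 ∧ b < a)

/-- `p₃` has a conflicting priority with respect to `(lt,p)` and `(lt',p')`. -/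
def ConflictPriority (lt lt' : ℤ → ℤ → Prop) (p p' p₃ : Pt) : Prop :=
  ∃ a b : ℤ, a ∈ Ival p p₃ ∧ a ∈ Ival p' p₃ ∧ b ∈ Ival p p₃ ∧ b ∈ Ival p' p₃ ∧
    Hmem lt p p₃ b ∧ ¬ Hmem lt p p₃ a ∧ Hmem lt' p' p₃ a ∧ ¬ Hmem lt' p' p₃ b

/-!
Write `H(p, q)` for the set of the `q.x - p.x` smallest elements of `I(p, q)` in the order `≺_p`.
Putting `q = (p.x + ℓ, C - p.x - ℓ)`, a bad pair is a conflicting priority at `q`: one element of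
`H(p, q) \ H(p', q)` and one of `H(p', q) \ H(p, q)`, both in `I(p, q) ∩ I(p', q)`.

The order `≺_p` lists the elements of `I(p, q)` from `p.x` up in increasing order and then those
below `p.x` in decreasing order. Counting, `H(p, q)` is the part of `I(p, q)` lying in
`[p.x + q.y, ∞)` if `q.y ≤ 0`, and in `[p.x, q.x + max p.y 0)` if `q.y > 0`. In either case the
traces of `H(p, q)` and `H(p', q)` on `I(p, q) ∩ I(p', q)` are nested, which excludes a conflict.
-/

theorem BadPair.exists_conflictPriority {lt lt' : ℤ → ℤ → Prop} {p p' : Pt} {a b : ℤ}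
    (h : BadPair lt lt' p p' a b) : ∃ q : Pt, ConflictPriority lt lt' p p' q := by
  obtain ⟨-, C, ℓ, -, -, ha, hb, ha', hb', haH, hbH, hbH', haH'⟩ := h
  have hC : p.1 + ℓ + (C - p.1 - ℓ) - 1 = C - 1 := by ring
  have hℓ : p.1 + ℓ - p.1 = ℓ := by ring
  have hℓ' : p.1 + ℓ - p'.1 = ℓ - (p'.1 - p.1) := by ring
  refine ⟨(p.1 + ℓ, C - p.1 - ℓ), b, a, ?_⟩
  simp only [Hmem, Ival, hC, hℓ, hℓ']
  exact ⟨hb, hb', ha, ha', haH, hbH, hbH', haH'⟩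

section WaterOrd

variable {p p' q : Pt} {a n z : ℤ}

theorem waterOrd_iff_of_le (hz : p.1 + p.2 ≤ z) (hpa : p.1 ≤ a) :
    waterOrd p z a ↔ p.1 ≤ z ∧ z < a := by
  rw [waterOrd]
  split_ifs <;> omega

theorem waterOrd_iff_of_lt (ha : p.1 + p.2 ≤ a) (hap : a < p.1) :
    waterOrd p z a ↔ a < z := by
  rw [waterOrd]
  split_ifs <;> omega

theorem rankLE_waterOrd_of_le (ha : a ∈ Finset.Icc (p.1 + p.2) n) (hpa : p.1 ≤ a) :
    rankLE (waterOrd p) (Finset.Icc (p.1 + p.2) n) a = a + 1 - (p.1 + max p.2 0) := by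
  rw [Finset.mem_Icc] at ha
  have filter_eq_Icc : ((Finset.Icc (p.1 + p.2) n).filter fun z => waterOrd p z a ∨ z = a) =
      Finset.Icc (p.1 + max p.2 0) a := by
    ext z
    rw [Finset.mem_filter, Finset.mem_Icc, Finset.mem_Icc]
    grind [waterOrd_iff_of_le]
  rw [rankLE, filter_eq_Icc, Int.card_Icc_of_le _ _ (by omega)]

theorem rankLE_waterOrd_of_lt (ha : a ∈ Finset.Icc (p.1 + p.2) n) (hap : a < p.1) :
    rankLE (waterOrd p) (Finset.Icc (p.1 + p.2) n) a = n + 1 - a := by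
  rw [Finset.mem_Icc] at ha
  have filter_eq_Icc : ((Finset.Icc (p.1 + p.2) n).filter fun z => waterOrd p z a ∨ z = a) =
      Finset.Icc a n := by
    ext z
    rw [Finset.mem_filter, Finset.mem_Icc, Finset.mem_Icc, waterOrd_iff_of_lt ha.1 hap]
    omega
  rw [rankLE, filter_eq_Icc, Int.card_Icc_of_le _ _ (by omega)]

theorem hmem_waterOrd_iff_of_nonpos (hq : q.2 ≤ 0) :
    Hmem (waterOrd p) p q a ↔ a ∈ Ival p q ∧ p.1 + q.2 ≤ a := by
  refine and_congr_right fun ha => ?_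
  have ha_lt : a ≤ q.1 + q.2 - 1 := (Finset.mem_Icc.mp ha).2
  rcases le_or_gt p.1 a with hpa | hap
  · rw [Ival, rankLE_waterOrd_of_le ha hpa]
    omega
  · rw [Ival, rankLE_waterOrd_of_lt ha hap]
    omega

theorem hmem_waterOrd_iff_of_pos (hq : 0 < q.2) :
    Hmem (waterOrd p) p q a ↔ a ∈ Ival p q ∧ a ∈ Set.Ico p.1 (q.1 + max p.2 0) := by
  refine and_congr_right fun ha => ?_
  rw [Set.mem_Ico]
  rcases le_or_gt p.1 a with hpa | hap
  · rw [Ival, rankLE_waterOrd_of_le ha hpa]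
    omega
  · rw [Ival, rankLE_waterOrd_of_lt ha hap]
    omega

theorem hmem_waterOrd_nested_of_le (h : p.1 ≤ p'.1) (q : Pt) :
    (∀ a ∈ Ival p q, Hmem (waterOrd p') p' q a → Hmem (waterOrd p) p q a) ∨
      ∀ a ∈ Ival p' q, Hmem (waterOrd p) p q a → Hmem (waterOrd p') p' q a := by
  rcases le_or_gt q.2 0 with hq | hq
  · simp only [hmem_waterOrd_iff_of_nonpos hq]
    exact .inl fun a ha ⟨_, hle⟩ => ⟨ha, (add_le_add h le_rfl).trans hle⟩
  simp only [hmem_waterOrd_iff_of_pos hq, Set.mem_Ico]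
  rcases le_or_gt (max p'.2 0) (max p.2 0) with hy | hy
  · exact .inl fun a ha ⟨_, hle, hlt⟩ => ⟨ha, h.trans hle, hlt.trans_le (add_le_add le_rfl hy)⟩
  · -- Here `0 < p'.2`, so that all of `Ival p' q` lies above `p'.1`.
    refine .inr fun a ha ⟨_, _, hlt⟩ => ⟨ha, ?_, hlt.trans (add_lt_add_right hy _)⟩
    have ha_ge : p'.1 + p'.2 ≤ a := (Finset.mem_Icc.mp ha).1
    omega

theorem not_conflictPriority_waterOrd (p p' q : Pt) :
    ¬ ConflictPriority (waterOrd p) (waterOrd p') p p' q := by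
  rintro ⟨a, b, ha, -, -, hb', hbH, haH, haH', hbH'⟩
  have nested := (le_total p.1 p'.1).elim (hmem_waterOrd_nested_of_le · q)
    fun h => (hmem_waterOrd_nested_of_le h q).symm
  rcases nested with hsub | hsub
  · exact haH (hsub a ha haH')
  · exact hbH' (hsub b hb' hbH)

end WaterOrd

/-- no two waterline orders have a bad pair. -/
theorem statement13 (p p' : Pt) :
    ∀ a b : ℤ, ¬ BadPairSym (waterOrd p) (waterOrd p') p p' a b := by
  rintro a b (⟨-, hbad⟩ | ⟨-, hbad⟩)
  · obtain ⟨q, hq⟩ := hbad.exists_conflictPriority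
    exact not_conflictPriority_waterOrd p p' q hq
  · obtain ⟨q, hq⟩ := hbad.exists_conflictPriority
    exact not_conflictPriority_waterOrd p' p q hq
end

section
/- (Lemma 5) The nonnegative-slope digital segment system generated by the waterline assignment satisfies all five properties (S1)–(S5), i.e., the waterline example is a CDS. -/
open scoped Classical

/-!
For `p.x ≤ q.x` and `p.y ≤ q.y`, the elements of `I(p,q)` that are smallest for the waterline order
at `p` form an interval of consecutive integers. The segment from `p` to `q` therefore climbs
vertically from `p` until it is as close to the waterline `y = 0` as the rows of `p` and `q` allow,
runs horizontally to the column of `q`, and climbs vertically to `q`. Equivalently, a point of the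
box spanned by `p` and `q` is on the segment iff it can be below both the waterline and `q` only in
the column of `p`, and above both the waterline and `p` only in the column of `q`. In this form
subsegments and prolongations are read off directly.
-/

lemma GridAdj.symm {u v : Pt} (h : GridAdj u v) : GridAdj v u := by
  unfold GridAdj at *
  rwa [abs_sub_comm v.1, abs_sub_comm v.2]

lemma IsGridPath.symm {S : Set Pt} {p q : Pt} (h : IsGridPath S p q) : IsGridPath S q p := by
  obtain ⟨n, f, h_start, h_end, h_adj, h_inj, rfl⟩ := h
  refine ⟨n, fun i ↦ f (n - i), by simpa using h_end, by simpa using h_start, ?_, ?_, ?_⟩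
  · intro i hi
    have h := h_adj (n - (i + 1)) (by omega)
    rw [show n - (i + 1) + 1 = n - i by omega] at h
    exact h.symm
  · intro i j hi hj hij
    have := h_inj _ _ (by omega) (by omega) hij
    omega
  · ext r
    constructor
    · rintro ⟨i, hi, rfl⟩
      exact ⟨n - i, by omega, congrArg f (by omega)⟩
    · rintro ⟨i, -, rfl⟩
      exact ⟨n - i, by omega, rfl⟩

lemma isGridPath_of_antidiagonal {X : ℤ → ℤ} {p q : Pt}
    (hle : p.1 + p.2 ≤ q.1 + q.2) (hp : X (p.1 + p.2) = p.1) (hq : X (q.1 + q.2) = q.1)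
    (hstep : ∀ d, X (d + 1) = X d ∨ X (d + 1) = X d + 1) :
    IsGridPath {r | p.1 + p.2 ≤ r.1 + r.2 ∧ r.1 + r.2 ≤ q.1 + q.2 ∧ r.1 = X (r.1 + r.2)} p q := by
  set f : ℕ → Pt := fun i ↦ (X (p.1 + p.2 + i), p.1 + p.2 + i - X (p.1 + p.2 + i)) with hf
  have f_sum (i : ℕ) : (f i).1 + (f i).2 = p.1 + p.2 + i := by simp only [hf]; omega
  have f_eq (r : Pt) (i : ℕ) (hr : r.1 + r.2 = p.1 + p.2 + i) (hX : r.1 = X (r.1 + r.2)) :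
      f i = r := by
    rw [hr] at hX
    exact Prod.ext hX.symm (by simp only [hf]; omega)
  refine ⟨(q.1 + q.2 - (p.1 + p.2)).toNat, f, f_eq p 0 (by simp) hp.symm,
    f_eq q _ (by omega) hq.symm, ?_, ?_, ?_⟩
  · intro i _
    have := hstep (p.1 + p.2 + i)
    simp only [GridAdj, hf, Nat.cast_add, Nat.cast_one, ← add_assoc, abs_eq_max_neg]
    omega
  · intro i j _ _ hij
    have hi := f_sum i
    rw [hij, f_sum j] at hi
    omega
  · ext r
    constructor
    · rintro ⟨hpr, hrq, hX⟩
      exact ⟨(r.1 + r.2 - (p.1 + p.2)).toNat, by omega, f_eq r _ (by omega) hX⟩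
    · rintro ⟨i, hi, rfl⟩
      have := f_sum i
      exact ⟨by omega, by omega, by rw [this]⟩

lemma genR_of_quad1 (ord : Pt → ℤ → ℤ → Prop) {p q : Pt} (h : Quad1 p q) :
    genR ord p q = seg (ord p) p q :=
  if_pos h

lemma genR_comm (ord : Pt → ℤ → ℤ → Prop) {p q : Pt} (h : NonnegPair p q) :
    genR ord p q = genR ord q p := by
  unfold genR
  split_ifs with hpq hqp hqp
  · obtain rfl : p = q := Prod.ext (by omega) (by omega)
    rfl
  · rfl
  · rfl
  · exact absurd h (not_or.mpr ⟨hpq, hqp⟩)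

theorem isCDS_of_quad1 {R : Pt → Pt → Set Pt}
    (comm : ∀ p q, NonnegPair p q → R p q = R q p)
    (path : ∀ p q, Quad1 p q → IsGridPath (R p q) p q)
    (box : ∀ p q, Quad1 p q → ∀ r ∈ R p q, Quad1 p r ∧ Quad1 r q)
    (convex : ∀ p q, Quad1 p q → ∀ r ∈ R p q, ∀ s ∈ R p q, Quad1 r s → R r s ⊆ R p q)
    (prolong_up : ∀ p q, Quad1 p q → ∃ r, r ∉ R p q ∧ Quad1 p r ∧ R p q ⊆ R p r)
    (prolong_down : ∀ p q, Quad1 p q → ∃ r, r ∉ R p q ∧ Quad1 r q ∧ R p q ⊆ R r q) :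
    IsCDS R := by
  have convex_nonneg : ∀ p q, Quad1 p q → ∀ r s, r ∈ R p q → s ∈ R p q → NonnegPair r s →
      R r s ⊆ R p q := by
    intro p q h r s hr hs hrs
    rcases id hrs with hle | hge
    · exact convex p q h r hr s hs hle
    · rw [comm r s hrs]
      exact convex p q h s hs r hr hge
  have aligned : ∀ p q, Quad1 p q → ∀ r ∈ R p q,
      (p.1 = q.1 → r.1 = p.1 ∧ r.1 = q.1) ∧ (p.2 = q.2 → r.2 = p.2 ∧ r.2 = q.2) := by
    intro p q h r hr
    obtain ⟨⟨_, _⟩, _, _⟩ := box p q h r hr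
    omega
  intro p q hpq
  rcases id hpq with h | h
  · refine ⟨path p q h, comm p q hpq, convex_nonneg p q h, ?_,
      fun e r hr ↦ ((aligned p q h r hr).1 e).1, fun e r hr ↦ ((aligned p q h r hr).2 e).1⟩
    obtain ⟨r, hr, hpr, hsub⟩ := prolong_up p q h
    exact ⟨r, hr, Or.inl hpr, hsub⟩
  · rw [comm p q hpq]
    refine ⟨(path q p h).symm, rfl, convex_nonneg q p h, ?_,
      fun e r hr ↦ ((aligned q p h r hr).1 e.symm).2,
      fun e r hr ↦ ((aligned q p h r hr).2 e.symm).2⟩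
    obtain ⟨r, hr, hrp, hsub⟩ := prolong_down q p h
    exact ⟨r, hr, Or.inr hrp, comm p r (Or.inr hrp) ▸ hsub⟩

lemma amongSmallest_card_iff_mem {lt : ℤ → ℤ → Prop} [Std.Asymm lt] {A J : Finset ℤ}
    (hAJ : A ⊆ J) (hlt : ∀ a ∈ A, ∀ b ∈ J, b ∉ A → lt a b) {x : ℤ} :
    AmongSmallest lt J A.card x ↔ x ∈ A := by
  simp only [AmongSmallest, rankLE, Nat.cast_le]
  constructor
  · rintro ⟨hxJ, hrank⟩
    by_contra hxA
    have hsub : insert x A ⊆ J.filter fun y ↦ lt y x ∨ y = x :=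
      Finset.insert_subset (Finset.mem_filter.mpr ⟨hxJ, Or.inr rfl⟩) fun a ha ↦
        Finset.mem_filter.mpr ⟨hAJ ha, Or.inl (hlt a ha x hxJ hxA)⟩
    have := Finset.card_le_card hsub
    rw [Finset.card_insert_of_notMem hxA] at this
    omega
  · intro hxA
    refine ⟨hAJ hxA, Finset.card_le_card fun y hy ↦ ?_⟩
    obtain ⟨hyJ, hyx⟩ := Finset.mem_filter.mp hy
    by_contra hyA
    rcases hyx with hyx | rfl
    · exact Std.Asymm.asymm _ _ hyx (hlt x hxA y hyJ hyA)
    · exact hyA hxA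

section Route

/-- The monotone lattice route from `p` to `q` that makes its horizontal move as close to the line
`y = w` as possible: below that line it stays in the column of `p`, above it in the column of `q`.
The guards `r.2 < q.2` and `p.2 < r.2` take care of a line `y = w` above `q` or below `p`, where
the horizontal move is in the row of `q` or of `p`. -/
def route (w : ℤ) (p q : Pt) : Set Pt :=
  {r | Quad1 p r ∧ Quad1 r q ∧ (r.2 < q.2 → r.2 < w → r.1 = p.1) ∧
    (p.2 < r.2 → w < r.2 → r.1 = q.1)}

/-- The row in which `route w p q` makes its horizontal move: `w` clamped to `[p.2, q.2]`. -/
def routeLevel (w : ℤ) (p q : Pt) : ℤ := max p.2 (min q.2 w)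

variable {w : ℤ} {p q r s : Pt}

lemma mem_route_iff_antidiagonal (h : Quad1 p q) :
    r ∈ route w p q ↔ p.1 + p.2 ≤ r.1 + r.2 ∧ r.1 + r.2 ≤ q.1 + q.2 ∧
      r.1 = max p.1 (min q.1 (r.1 + r.2 - routeLevel w p q)) := by
  simp only [route, routeLevel, Quad1, Set.mem_ofPred_eq] at *
  omega

lemma isGridPath_route (w : ℤ) (h : Quad1 p q) : IsGridPath (route w p q) p q := by
  rw [show route w p q = _ from Set.ext fun _ ↦ mem_route_iff_antidiagonal h]
  obtain ⟨hx, hy⟩ := h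
  unfold routeLevel
  apply isGridPath_of_antidiagonal (X := fun d ↦ max p.1 (min q.1 (d - max p.2 (min q.2 w))))
  all_goals omega

lemma route_subset_route (hr : r ∈ route w p q) (hs : s ∈ route w p q) :
    route w r s ⊆ route w p q := by
  intro t ht
  simp only [route, Quad1, Set.mem_ofPred_eq] at *
  omega

lemma exists_route_prolong_up (w : ℤ) (h : Quad1 p q) :
    ∃ r, r ∉ route w p q ∧ Quad1 p r ∧ route w p q ⊆ route w p r := by
  obtain hw | hw := le_or_gt w q.2
  · refine ⟨(q.1, q.2 + 1), ?_, ?_, fun t ht ↦ ?_⟩ <;>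
      simp only [route, Quad1, Set.mem_ofPred_eq] at * <;> omega
  · refine ⟨(q.1 + 1, q.2), ?_, ?_, fun t ht ↦ ?_⟩ <;>
      simp only [route, Quad1, Set.mem_ofPred_eq] at * <;> omega

lemma exists_route_prolong_down (w : ℤ) (h : Quad1 p q) :
    ∃ r, r ∉ route w p q ∧ Quad1 r q ∧ route w p q ⊆ route w r q := by
  obtain hw | hw := le_or_gt p.2 w
  · refine ⟨(p.1, p.2 - 1), ?_, ?_, fun t ht ↦ ?_⟩ <;>
      simp only [route, Quad1, Set.mem_ofPred_eq] at * <;> omega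
  · refine ⟨(p.1 - 1, p.2), ?_, ?_, fun t ht ↦ ?_⟩ <;>
      simp only [route, Quad1, Set.mem_ofPred_eq] at * <;> omega

end Route

section Waterline

variable {p q : Pt}

instance waterOrd_asymm : Std.Asymm (waterOrd p) where
  asymm a b := by
    unfold waterOrd
    split_ifs <;> omega

lemma hmem_waterOrd_iff (h : Quad1 p q) {a : ℤ} :
    Hmem (waterOrd p) p q a ↔
      a ∈ Finset.Ico (p.1 + routeLevel 0 p q) (q.1 + routeLevel 0 p q) := by
  obtain ⟨hx, hy⟩ := h
  have hcard : q.1 - p.1 =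
      ((Finset.Ico (p.1 + routeLevel 0 p q) (q.1 + routeLevel 0 p q)).card : ℤ) := by
    rw [Int.card_Ico]
    omega
  rw [Hmem, hcard]
  unfold routeLevel
  apply amongSmallest_card_iff_mem
  · intro a
    simp only [Ival, Finset.mem_Ico, Finset.mem_Icc]
    omega
  · intro a ha b hb hbA
    simp only [Ival, Finset.mem_Ico, Finset.mem_Icc] at ha hb hbA
    unfold waterOrd
    split_ifs <;> omega

lemma seg_waterOrd (h : Quad1 p q) : seg (waterOrd p) p q = route 0 p q := by
  ext r
  have hfilter : ((Finset.Icc (p.1 + p.2) (r.1 + r.2 - 1)).filter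
      fun a ↦ Hmem (waterOrd p) p q a) =
      Finset.Ico (p.1 + routeLevel 0 p q) (min (r.1 + r.2) (q.1 + routeLevel 0 p q)) := by
    ext a
    have : p.2 ≤ routeLevel 0 p q := le_max_left _ _
    simp only [Finset.mem_filter, hmem_waterOrd_iff h, Finset.mem_Icc, Finset.mem_Ico]
    omega
  rw [mem_route_iff_antidiagonal h, seg, Set.mem_ofPred_eq, hfilter, Int.card_Ico]
  obtain ⟨hx, hy⟩ := h
  unfold routeLevel
  omega

lemma genR_waterOrd (h : Quad1 p q) : genR waterOrd p q = route 0 p q :=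
  (genR_of_quad1 waterOrd h).trans (seg_waterOrd h)

end Waterline

/-- Lemma 5: the waterline example is a CDS. -/
theorem statement14 : IsCDS (genR waterOrd) := by
  apply isCDS_of_quad1
  case comm => exact fun p q h ↦ genR_comm waterOrd h
  case path => exact fun p q h ↦ genR_waterOrd h ▸ isGridPath_route 0 h
  case box =>
    intro p q h r hr
    rw [genR_waterOrd h] at hr
    exact ⟨hr.1, hr.2.1⟩
  case convex =>
    intro p q h r hr s hs hrs
    rw [genR_waterOrd h] at hr hs ⊢
    rw [genR_waterOrd hrs]
    exact route_subset_route hr hs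
  case prolong_up =>
    intro p q h
    obtain ⟨r, hr, hpr, hsub⟩ := exists_route_prolong_up 0 h
    exact ⟨r, by rwa [genR_waterOrd h], hpr, by rwa [genR_waterOrd h, genR_waterOrd hpr]⟩
  case prolong_down =>
    intro p q h
    obtain ⟨r, hr, hrq, hsub⟩ := exists_route_prolong_down 0 h
    exact ⟨r, by rwa [genR_waterOrd h], hrq, by rwa [genR_waterOrd h, genR_waterOrd hrq]⟩
end
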